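/- arXiv:2304.10489 — 4 statements merged into one kernel-verified Lean document; each statement's English description precedes it below -/
import Mathlib

section
/- Let τ be a plane tree with vertices u(0), …, u(ζ(τ)−1) listed in lexicographical order and Łukasiewicz path W^↑. For all 0 ≤ i ≤ j ≤ ζ(τ)−1, the set S = {m ∈ {0,…,i} : W^↑(m) = min_{m ≤ n ≤ j} W^↑(n)} is nonempty, S is exactly the set of indices m such that u(m) is a common ancestor of u(i) and u(j), and u(max S) is the most recent common ancestor u(i) ∧ u(j), i.e., the ≼-maximal element of {w ∈ τ : w ≼ u(i) and w ≼ u(j)}. -/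
/-!
Everything reduces to one fact: for `m ≤ j`, the vertex `u m` is an ancestor of `u j` iff
`W m ≤ W n` for all `m ≤ n ≤ j` (`prefix_of_forall_le` and `le_of_prefix`).

By telescoping, `W n - W m` is the number of vertices whose parent has index in `[m, n)`, minus
`n - m`. Descendants of `u m` occupy an interval of indices starting at `m`, because a prefix of
both ends of a lexicographic interval is a prefix of everything in between
(`prefix_of_le_of_le`).
* If `u m ≼ u j` and `m ≤ n ≤ j`, each of the `n - m` vertices `u l`, `m < l ≤ n`, has its parent
  among the indices `[m, n)`, so `W n ≥ W m`.
* If `u m` is not an ancestor of `u j`, let `k ≤ j` be the first index after `m` with `u m` not an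
  ancestor of `u k`. All children of `u m, …, u (k-1)` are proper descendants of `u m`, hence lie
  among the `k - m - 1` vertices of index in `(m, k)`, so `W k < W m`.

Thus `S` is the set of indices of common ancestors, and its largest element gives the deepest one:
any other common ancestor `w` satisfies `w ≤ u (max S) ≤ u i` lexicographically and `w ≼ u i`, so
`w ≼ u (max S)` by the same convexity.
-/

open scoped Classical

/-- A plane tree: a nonempty finite subset of the set `𝕌` of finite sequences of
positive integers, containing the root `∅ = []`, closed under taking parents, and
such that for each vertex `u` there is `c(u) ≥ 0` with `u ++ [i]` a vertex iff
`1 ≤ i ≤ c(u)`. -/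
structure PlaneTree where
  verts : Finset (List ℕ)
  root_mem : ([] : List ℕ) ∈ verts
  parent_mem : ∀ (u : List ℕ) (j : ℕ), u ++ [j] ∈ verts → u ∈ verts
  children_spec : ∀ u ∈ verts, ∃ c : ℕ, ∀ i : ℕ, u ++ [i] ∈ verts ↔ 1 ≤ i ∧ i ≤ c

namespace PlaneTree

/-- The number of children `c(u)` of a vertex `u`. -/
noncomputable def numChildren (T : PlaneTree) (u : List ℕ) : ℕ :=
  (T.verts.filter fun v => u <+: v ∧ v.length = u.length + 1).card

end PlaneTree

/-- The lexicographical order `≺_↑` on vertices: `v ≺_↑ w` iff `v` is a strict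
prefix of `w`, or at the first disagreement the entry of `v` is smaller. -/
def lexLt (v w : List ℕ) : Prop := List.Lex (· < ·) v w

/-- The reverse-lexicographical order `≺_↓` on vertices: `v ≺_↓ w` iff `v` is a
strict prefix of `w`, or at the first disagreement the entry of `v` is larger. -/
def rlexLt (v w : List ℕ) : Prop := List.Lex (· > ·) v w

theorem nil_le_list (a : List ℕ) : [] ≤ a := by
  cases a with
  | nil => exact le_rfl
  | cons x a => exact le_of_lt List.Lex.nil

theorem list_cons_le_cons_iff {x y : ℕ} {a b : List ℕ} :
    x :: a ≤ y :: b ↔ x < y ∨ x = y ∧ a ≤ b := by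
  constructor
  · intro h
    rcases h.lt_or_eq with h | h
    · rcases h with _ | h | h
      · exact Or.inl h
      · exact Or.inr ⟨rfl, le_of_lt h⟩
    · obtain ⟨rfl, rfl⟩ := List.cons.inj h
      exact Or.inr ⟨rfl, le_rfl⟩
  · rintro (h | ⟨rfl, h⟩)
    · exact le_of_lt (List.Lex.rel h)
    · exact List.cons_le_cons x h

/-- Lexicographic intervals are convex for the prefix relation. -/
theorem prefix_of_le_of_le {a b c : List ℕ} (hab : a ≤ b) (hbc : b ≤ c) (hac : a <+: c) :
    a <+: b := by
  induction a generalizing b c with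
  | nil => exact List.nil_prefix
  | cons x a ih =>
    cases b with
    | nil => exact absurd (hab.antisymm (nil_le_list _)) (by simp)
    | cons y b =>
      cases c with
      | nil => simp at hac
      | cons z c =>
        rw [List.cons_prefix_cons] at hac ⊢
        obtain ⟨rfl, hac⟩ := hac
        rw [list_cons_le_cons_iff] at hab hbc
        rcases hab with hab | ⟨rfl, hab⟩
        · omega
        · rcases hbc with hbc | ⟨-, hbc⟩
          · omega
          · exact ⟨rfl, ih hab hbc hac⟩

theorem le_of_isPrefix {a b : List ℕ} (h : a <+: b) : a ≤ b := by
  induction a generalizing b with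
  | nil => exact nil_le_list b
  | cons x a ih =>
    cases b with
    | nil => simp at h
    | cons y b =>
      rw [List.cons_prefix_cons] at h
      rw [list_cons_le_cons_iff]
      exact Or.inr ⟨h.1, ih h.2⟩

namespace PlaneTree

/-- The set of children of `v`, whose cardinality is `T.numChildren v`. -/
noncomputable def childSet (T : PlaneTree) (v : List ℕ) : Finset (List ℕ) :=
  T.verts.filter fun w => v <+: w ∧ w.length = v.length + 1

theorem mem_childSet {T : PlaneTree} {v w : List ℕ} :
    w ∈ T.childSet v ↔ w ∈ T.verts ∧ v <+: w ∧ w.length = v.length + 1 := by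
  simp [childSet]

/-- A proper descendant of `v` is a child of some descendant of `v`. -/
theorem exists_parent (T : PlaneTree) {v w : List ℕ} (hw : w ∈ T.verts) (hvw : v <+: w)
    (hne : v ≠ w) : ∃ p ∈ T.verts, v <+: p ∧ w ∈ T.childSet p ∧ p ≠ w := by
  rcases List.eq_nil_or_concat w with rfl | ⟨p, x, rfl⟩
  · exact absurd (List.prefix_nil.mp hvw) hne
  · rw [List.concat_eq_append] at *
    refine ⟨p, T.parent_mem p x hw, ?_, ?_, by simp⟩
    · rcases List.prefix_concat_iff.mp hvw with h | h
      · exact absurd h hne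
      · exact h
    · exact mem_childSet.mpr ⟨hw, List.prefix_append _ _, by simp⟩

theorem childSet_disjoint (T : PlaneTree) {v w : List ℕ} (h : v ≠ w) :
    Disjoint (T.childSet v) (T.childSet w) := by
  rw [Finset.disjoint_left]
  intro x hv hw
  rw [mem_childSet] at hv hw
  refine h ((List.prefix_of_prefix_length_le hv.2.1 hw.2.1 ?_).eq_of_length ?_) <;> omega

variable {T : PlaneTree} {N : ℕ} {u : ℕ → List ℕ} {W : ℕ → ℤ}

/-- Telescoped recursion: with `childSet`s disjoint, the sum counts the vertices whose parent has
index in `[m, n)`. -/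
theorem walk_sub (hWrec : ∀ n < N, W (n + 1) = W n + T.numChildren (u n) - 1)
    {m n : ℕ} (hmn : m ≤ n) (hn : n ≤ N) :
    W n - W m = ((∑ p ∈ Finset.Ico m n, (T.childSet (u p)).card : ℕ) : ℤ) - (n - m) := by
  induction n, hmn using Nat.le_induction with
  | base => simp
  | succ n hmn ih =>
    rw [Finset.sum_Ico_succ_top hmn]
    have h1 := ih (by omega)
    have h2 := hWrec n (by omega)
    have h3 : T.numChildren (u n) = (T.childSet (u n)).card := rfl
    rw [h3] at h2
    push_cast at *
    linarith

theorem enum_strictMonoOn (hu_mono : ∀ i j : ℕ, i < j → j < N → lexLt (u i) (u j)) :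
    StrictMonoOn u (Set.Iio N) :=
  fun i _ j hj hij => hu_mono i j hij hj

/-- The walk stays at or above `W m` as long as it visits descendants of `u m`. -/
theorem le_of_prefix (hu_mem : ∀ n < N, u n ∈ T.verts)
    (hu_surj : ∀ v ∈ T.verts, ∃ n < N, u n = v)
    (hu : StrictMonoOn u (Set.Iio N))
    (hWrec : ∀ n < N, W (n + 1) = W n + T.numChildren (u n) - 1)
    {m n j : ℕ} (hmn : m ≤ n) (hnj : n ≤ j) (hj : j < N) (h : u m <+: u j) :
    W m ≤ W n := by
  have hsub : (Finset.Ioc m n).image u ⊆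
      (Finset.Ico m n).biUnion fun p => T.childSet (u p) := by
    intro w hw
    obtain ⟨l, hl, rfl⟩ := Finset.mem_image.mp hw
    rw [Finset.mem_Ioc] at hl
    have hlN : l < N := by omega
    have hmN : m < N := by omega
    have hml : u m < u l := hu hmN hlN hl.1
    have hpre : u m <+: u l :=
      prefix_of_le_of_le hml.le (hu.monotoneOn hlN hj (by omega)) h
    obtain ⟨p, hp, hmp, hlp, hne⟩ := T.exists_parent (hu_mem l hlN) hpre hml.ne
    obtain ⟨q, hq, rfl⟩ := hu_surj p hp
    have h1 : m ≤ q := (hu.le_iff_le hmN hq).mp (le_of_isPrefix hmp)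
    have h2 : q < l := (hu.lt_iff_lt hq hlN).mp
      (lt_of_le_of_ne (le_of_isPrefix (mem_childSet.mp hlp).2.1) hne)
    exact Finset.mem_biUnion.mpr ⟨q, Finset.mem_Ico.mpr ⟨h1, by omega⟩, hlp⟩
  have hinj : Set.InjOn u (Finset.Ioc m n : Set ℕ) := by
    refine hu.injOn.mono fun l hl => ?_
    have := (Finset.mem_Ioc.mp (Finset.mem_coe.mp hl)).2
    exact Set.mem_Iio.mpr (by omega)
  have hcard := (Finset.card_le_card hsub).trans Finset.card_biUnion_le
  rw [Finset.card_image_of_injOn hinj, Nat.card_Ioc] at hcard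
  have hW := walk_sub hWrec hmn (by omega : n ≤ N)
  omega

/-- The walk drops below `W m` at the first vertex after `u m` that is not a descendant of `u m`,
so staying at or above `W m` up to time `j` forces `u m ≼ u j`. -/
theorem prefix_of_forall_le
    (hu_surj : ∀ v ∈ T.verts, ∃ n < N, u n = v)
    (hu : StrictMonoOn u (Set.Iio N))
    (hWrec : ∀ n < N, W (n + 1) = W n + T.numChildren (u n) - 1)
    {m j : ℕ} (hmj : m ≤ j) (hj : j < N) (h : ∀ n, m ≤ n → n ≤ j → W m ≤ W n) :
    u m <+: u j := by
  by_contra hcon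
  have hex : ∃ k, m ≤ k ∧ ¬ u m <+: u k := ⟨j, hmj, hcon⟩
  obtain ⟨k, ⟨hmk, hk⟩, hmin⟩ : ∃ k, (m ≤ k ∧ ¬ u m <+: u k) ∧
      ∀ l < k, ¬ (m ≤ l ∧ ¬ u m <+: u l) :=
    ⟨Nat.find hex, Nat.find_spec hex, fun l hl => Nat.find_min hex hl⟩
  have hkj : k ≤ j := by
    by_contra hlt
    exact hmin j (by omega) ⟨hmj, hcon⟩
  have hmk' : m < k := by
    refine lt_of_le_of_ne hmk ?_
    rintro rfl
    exact hk List.prefix_rfl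
  have hmN : m < N := by omega
  have hkN : k < N := by omega
  have hsub : ((Finset.Ico m k).biUnion fun p => T.childSet (u p)) ⊆
      (Finset.Ioo m k).image u := by
    intro w hw
    obtain ⟨p, hp, hwp⟩ := Finset.mem_biUnion.mp hw
    rw [Finset.mem_Ico] at hp
    obtain ⟨hwT, hpw, hlen⟩ := mem_childSet.mp hwp
    have hmp : u m <+: u p := by
      by_contra hc
      exact hmin p hp.2 ⟨hp.1, hc⟩
    have hmw : u m <+: w := hmp.trans hpw
    obtain ⟨l, hl, rfl⟩ := hu_surj w hwT
    have hne : u m ≠ u l := by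
      intro he
      have := hmp.length_le
      rw [← he] at hlen
      omega
    have hml : m < l := (hu.lt_iff_lt hmN hl).mp (lt_of_le_of_ne (le_of_isPrefix hmw) hne)
    have hlk : l < k := by
      by_contra hc
      exact hk (prefix_of_le_of_le (hu.monotoneOn hmN hkN hmk)
        (hu.monotoneOn hkN hl (by omega)) hmw)
    exact Finset.mem_image.mpr ⟨l, Finset.mem_Ioo.mpr ⟨hml, hlk⟩, rfl⟩
  have hdisj : Set.PairwiseDisjoint (Finset.Ico m k : Set ℕ) fun p => T.childSet (u p) := by
    intro p hp q hq hpq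
    have hp' := (Finset.mem_Ico.mp (Finset.mem_coe.mp hp)).2
    have hq' := (Finset.mem_Ico.mp (Finset.mem_coe.mp hq)).2
    exact T.childSet_disjoint fun he =>
      hpq (hu.injOn (Set.mem_Iio.mpr (by omega)) (Set.mem_Iio.mpr (by omega)) he)
  have hcard := (Finset.card_le_card hsub).trans Finset.card_image_le
  rw [Finset.card_biUnion hdisj, Nat.card_Ioo] at hcard
  have hW := walk_sub hWrec hmk (by omega : k ≤ N)
  have := h k hmk hkj
  omega

end PlaneTree

/-- The infimum is attained here: the image is finite and contains `W m`. -/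
theorem eq_sInf_image_Icc_iff (W : ℕ → ℤ) {m j : ℕ} (hmj : m ≤ j) :
    W m = sInf (W '' Set.Icc m j) ↔ ∀ n, m ≤ n → n ≤ j → W m ≤ W n := by
  have hbdd : BddBelow (W '' Set.Icc m j) := ((Set.finite_Icc m j).image W).bddBelow
  have hmem : W m ∈ W '' Set.Icc m j := ⟨m, ⟨le_rfl, hmj⟩, rfl⟩
  constructor
  · intro h n h1 h2
    rw [h]
    exact csInf_le hbdd ⟨n, ⟨h1, h2⟩, rfl⟩
  · intro h
    refine le_antisymm (le_csInf ⟨_, hmem⟩ ?_) (csInf_le hbdd hmem)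
    rintro _ ⟨n, ⟨h1, h2⟩, rfl⟩
    exact h n h1 h2

/-- For `0 ≤ i ≤ j ≤ ζ(τ)−1`, the set
`S = {m ∈ {0,…,i} : W^↑(m) = min_{m ≤ n ≤ j} W^↑(n)}` is nonempty, `S` is exactly
the set of indices `m` such that `u(m)` is a common ancestor of `u(i)` and `u(j)`,
and `u(max S)` is the most recent common ancestor `u(i) ∧ u(j)`, i.e. the
`≼`-maximal common ancestor of `u(i)` and `u(j)`. -/
theorem mrca_via_lukasiewicz
    (T : PlaneTree) (N : ℕ) (hN : N = T.verts.card)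
    (u : ℕ → List ℕ)
    (hu_mem : ∀ n < N, u n ∈ T.verts)
    (hu_surj : ∀ v ∈ T.verts, ∃ n < N, u n = v)
    (hu_mono : ∀ i j : ℕ, i < j → j < N → lexLt (u i) (u j))
    (W : ℕ → ℤ)
    (hW0 : W 0 = 0)
    (hWrec : ∀ n < N, W (n + 1) = W n + T.numChildren (u n) - 1)
    (i j : ℕ) (hij : i ≤ j) (hj : j < N)
    (S : Set ℕ) (hS : S = {m | m ≤ i ∧ W m = sInf (W '' Set.Icc m j)}) :
    S.Nonempty ∧
    (∀ m < N, m ∈ S ↔ (u m <+: u i ∧ u m <+: u j)) ∧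
    (u (sSup S) ∈ T.verts ∧ u (sSup S) <+: u i ∧ u (sSup S) <+: u j ∧
      ∀ w ∈ T.verts, w <+: u i → w <+: u j → w <+: u (sSup S)) := by
  have hu := PlaneTree.enum_strictMonoOn hu_mono
  have hi : i < N := by omega
  have hmemS : ∀ m < N, m ∈ S ↔ (u m <+: u i ∧ u m <+: u j) := by
    intro m hm
    rw [hS, Set.mem_ofPred_eq]
    constructor
    · rintro ⟨hmi, hW⟩
      rw [eq_sInf_image_Icc_iff W (hmi.trans hij)] at hW
      exact ⟨PlaneTree.prefix_of_forall_le hu_surj hu hWrec hmi hi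
          fun n h1 h2 => hW n h1 (h2.trans hij),
        PlaneTree.prefix_of_forall_le hu_surj hu hWrec (hmi.trans hij) hj hW⟩
    · rintro ⟨h1, h2⟩
      have hmi : m ≤ i := (hu.le_iff_le hm hi).mp (le_of_isPrefix h1)
      refine ⟨hmi, (eq_sInf_image_Icc_iff W (hmi.trans hij)).mpr fun n hmn hnj => ?_⟩
      exact PlaneTree.le_of_prefix hu_mem hu_surj hu hWrec hmn hnj hj h2
  have hne : S.Nonempty := by
    obtain ⟨r, hr, hr0⟩ := hu_surj [] T.root_mem
    exact ⟨r, (hmemS r hr).mpr (by simp [hr0])⟩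
  have hle : ∀ m ∈ S, m ≤ i := by
    intro m hm
    rw [hS] at hm
    exact hm.1
  have hbdd : BddAbove S := ⟨i, hle⟩
  have hmax : sSup S ∈ S := Nat.sSup_mem hne hbdd
  have hmaxN : sSup S < N := (hle _ hmax).trans_lt hi
  obtain ⟨hpi, hpj⟩ := (hmemS _ hmaxN).mp hmax
  refine ⟨hne, hmemS, hu_mem _ hmaxN, hpi, hpj, ?_⟩
  intro w hw hwi hwj
  obtain ⟨k, hk, rfl⟩ := hu_surj w hw
  have hkS : k ≤ sSup S := le_csSup hbdd ((hmemS k hk).mpr ⟨hwi, hwj⟩)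
  exact prefix_of_le_of_le (hu.monotoneOn hk hmaxN hkS) (le_of_isPrefix hpi) hwi
end

section
/- Let τ be a plane tree with vertices u(0), …, u(ζ(τ)−1) listed in lexicographical order and Łukasiewicz path W^↑. For every 0 ≤ k ≤ ζ(τ)−1, let T = inf{m > k : W^↑(m) = W^↑(k) − 1}. Then T ≤ ζ(τ), the set {u(k), u(k+1), …, u(T−1)} equals the set of descendants {v ∈ τ : u(k) ≼ v} of u(k), and D(k) := T − (k+1) equals the number of strict descendants of u(k), i.e., the cardinality of {v ∈ τ : u(k) ≺ v}. -/
/-!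
The descendants of `u k` occupy an interval of indices `[k, e)` with `e ≤ N`, because the
lexicographical order is a linear extension of the prefix order in which the extensions of a fixed
word are order-convex (`prefix_of_lt_of_lt`).

Summing the recursion, `W m - W k` is the number of children of `u k, …, u (m - 1)` minus `m - k`
(`walk_eq_card_childrenOf`).
* For `m = e`, those children are exactly the strict descendants of `u k`, i.e.
  `u (k + 1), …, u (e - 1)`, so `W e = W k - 1`.
* For `k < m < e`, each of `u (k + 1), …, u m` has its parent among `u k, …, u (m - 1)`, so there
  are at least `m - k` children and `W m ≥ W k`.

Hence `e` is the first time after `k` at which `W` takes the value `W k - 1`.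
-/

open scoped Classical

/-! ### Prefixes and the lexicographical order -/

theorem lt_of_prefix_of_ne {v w : List ℕ} (h : v <+: w) (hne : v ≠ w) : v < w := by
  induction v generalizing w with
  | nil =>
    cases w with
    | nil => exact absurd rfl hne
    | cons b w => exact List.Lex.nil
  | cons a v ih =>
    cases w with
    | nil => simp at h
    | cons b w =>
      obtain ⟨rfl, h'⟩ := List.cons_prefix_cons.1 h
      exact List.Lex.cons (ih h' (fun h => hne (by rw [h])))

/-- The extensions of a fixed word are order-convex for the lexicographical order. -/
theorem prefix_of_lt_of_lt {a b c : List ℕ} (hab : a < b) (hbc : b < c) (hac : a <+: c) :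
    a <+: b := by
  induction a generalizing b c with
  | nil => exact List.nil_prefix
  | cons x a ih =>
    cases c with
    | nil => simp at hac
    | cons z c =>
      obtain ⟨rfl, hac_tail⟩ := List.cons_prefix_cons.1 hac
      cases b with
      | nil => exact absurd hab (by simp)
      | cons y b =>
        rw [List.cons_lt_cons_iff] at hab hbc
        have hxy : x = y := by omega
        subst hxy
        simp only [lt_irrefl, true_and, false_or] at hab hbc
        exact List.cons_prefix_cons.2 ⟨rfl, ih hab hbc hac_tail⟩

theorem dropLast_lt {v : List ℕ} (hv : v ≠ []) : v.dropLast < v := by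
  refine lt_of_prefix_of_ne v.dropLast_prefix fun h => ?_
  have h1 := congrArg List.length h
  have h2 := List.length_pos_iff.2 hv
  rw [List.length_dropLast] at h1
  omega

theorem prefix_dropLast {a v : List ℕ} (h : a <+: v) (hne : a ≠ v) : a <+: v.dropLast := by
  refine List.prefix_of_prefix_length_le h v.dropLast_prefix ?_
  have h1 := h.length_le
  have h2 : a.length ≠ v.length := fun h' => hne (h.eq_of_length h')
  rw [List.length_dropLast]
  omega

/-! ### Children in a plane tree -/

namespace PlaneTree

theorem dropLast_mem (T : PlaneTree) {v : List ℕ} (hv : v ∈ T.verts) (hne : v ≠ []) :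
    v.dropLast ∈ T.verts := by
  apply T.parent_mem v.dropLast (v.getLast hne)
  rwa [List.dropLast_append_getLast hne]

/-- The vertices of `T` whose parent lies in `S`; the parent of a nonempty word is the word with
its last letter deleted. -/
noncomputable def childrenOf (T : PlaneTree) (S : Finset (List ℕ)) : Finset (List ℕ) :=
  T.verts.filter fun v => v ≠ [] ∧ v.dropLast ∈ S

theorem mem_childrenOf {T : PlaneTree} {S : Finset (List ℕ)} {v : List ℕ} :
    v ∈ T.childrenOf S ↔ v ∈ T.verts ∧ v ≠ [] ∧ v.dropLast ∈ S := by
  simp [childrenOf]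

theorem numChildren_eq (T : PlaneTree) (w : List ℕ) :
    T.numChildren w = (T.childrenOf {w}).card := by
  unfold numChildren
  congr 1
  ext v
  simp only [Finset.mem_filter, mem_childrenOf, Finset.mem_singleton]
  refine and_congr_right fun _ => ⟨?_, ?_⟩
  · rintro ⟨hp, hl⟩
    have hne : v ≠ [] := by
      rintro rfl
      simp at hl
    have hw : w ≠ v := by
      rintro rfl
      omega
    refine ⟨hne, ((prefix_dropLast hp hw).eq_of_length ?_).symm⟩
    rw [List.length_dropLast]
    omega
  · rintro ⟨hne, rfl⟩
    refine ⟨v.dropLast_prefix, ?_⟩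
    have := List.length_pos_iff.2 hne
    rw [List.length_dropLast]
    omega

theorem card_childrenOf_insert (T : PlaneTree) {S : Finset (List ℕ)} {w : List ℕ} (hw : w ∉ S) :
    (T.childrenOf (insert w S)).card = (T.childrenOf S).card + T.numChildren w := by
  rw [numChildren_eq, ← Finset.card_union_of_disjoint]
  · congr 1
    ext v
    simp only [Finset.mem_union, mem_childrenOf, Finset.mem_insert, Finset.mem_singleton]
    tauto
  · rw [Finset.disjoint_left]
    intro v h1 h2
    rw [mem_childrenOf] at h1 h2
    rw [Finset.mem_singleton] at h2
    exact hw (h2.2.2 ▸ h1.2.2)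

/-- The increment of the Łukasiewicz path over `[k, m)` counts the children of
`u k, …, u (m - 1)`, minus one per step. -/
theorem walk_eq_card_childrenOf (T : PlaneTree) {N : ℕ} {u : ℕ → List ℕ}
    (hinj : Set.InjOn u (Set.Iio N)) {W : ℕ → ℤ}
    (hWrec : ∀ n < N, W (n + 1) = W n + T.numChildren (u n) - 1)
    {k m : ℕ} (hkm : k ≤ m) (hm : m ≤ N) :
    W m = W k + (T.childrenOf ((Finset.Ico k m).image u)).card - ((m : ℤ) - k) := by
  induction m, hkm using Nat.le_induction with
  | base => simp [childrenOf]
  | succ m hkm ih =>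
    have hnot : u m ∉ (Finset.Ico k m).image u := by
      intro h
      obtain ⟨i, hi, hiu⟩ := Finset.mem_image.1 h
      rw [Finset.mem_Ico] at hi
      have := hinj (Set.mem_Iio.2 (by omega)) (Set.mem_Iio.2 (by omega)) hiu
      omega
    have hins : (Finset.Ico k (m + 1)).image u = insert (u m) ((Finset.Ico k m).image u) := by
      rw [← Finset.image_insert]
      congr 1
      ext i
      simp only [Finset.mem_Ico, Finset.mem_insert]
      omega
    rw [hWrec m (by omega), ih (by omega), hins, card_childrenOf_insert T hnot]
    push_cast
    ring

end PlaneTree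

/-! ### The interval of descendants -/

/-- For `0 ≤ k ≤ ζ(τ)−1`, let `T = inf{m > k : W^↑(m) = W^↑(k) − 1}` (the set is
nonempty). Then `T ≤ ζ(τ)`, the set `{u(k), …, u(T−1)}` is exactly the set of
descendants of `u(k)`, and `D(k) = T − (k+1)` is the number of strict
descendants of `u(k)`. -/
theorem descendants_via_lukasiewicz
    (T : PlaneTree) (N : ℕ) (hN : N = T.verts.card)
    (u : ℕ → List ℕ)
    (hu_mem : ∀ n < N, u n ∈ T.verts)
    (hu_surj : ∀ v ∈ T.verts, ∃ n < N, u n = v)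
    (hu_mono : ∀ i j : ℕ, i < j → j < N → lexLt (u i) (u j))
    (W : ℕ → ℤ)
    (hW0 : W 0 = 0)
    (hWrec : ∀ n < N, W (n + 1) = W n + T.numChildren (u n) - 1)
    (k : ℕ) (hk : k < N)
    (Tk : ℕ) (hTk : Tk = sInf {m | k < m ∧ W m = W k - 1}) :
    {m | k < m ∧ W m = W k - 1}.Nonempty ∧
    Tk ≤ N ∧
    u '' Set.Ico k Tk = {v | v ∈ T.verts ∧ u k <+: v} ∧
    Tk - (k + 1) = Set.ncard {v | v ∈ T.verts ∧ u k <+: v ∧ v ≠ u k} := by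
  have hlt : ∀ i j, i < N → j < N → u i < u j → i < j := by
    intro i j hi hj h
    by_contra hij
    rcases Nat.lt_or_eq_of_le (not_lt.1 hij) with h' | rfl
    · exact lt_asymm h (hu_mono j i h' hi)
    · exact lt_irrefl _ h
  have hinj : Set.InjOn u (Set.Iio N) := by
    intro i hi j hj h
    rcases lt_trichotomy i j with h' | h' | h'
    · exact absurd h (ne_of_lt (show u i < u j from hu_mono i j h' hj))
    · exact h'
    · exact absurd h.symm (ne_of_lt (show u j < u i from hu_mono j i h' hi))
  -- `e` is the first index from `k` on that is not the index of a descendant of `u k`.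
  obtain ⟨e, hke, heN, hin, hout⟩ : ∃ e, k < e ∧ e ≤ N ∧ (∀ j, k ≤ j → j < e → u k <+: u j) ∧
      ∀ j < N, u k <+: u j → k ≤ j ∧ j < e := by
    have hex : ∃ j, k ≤ j ∧ ¬ (j < N ∧ u k <+: u j) := ⟨N, hk.le, fun h => lt_irrefl _ h.1⟩
    have hspec := Nat.find_spec hex
    have hmin := fun j (hj : j < Nat.find hex) => Nat.find_min hex hj
    have hle : Nat.find hex ≤ N := Nat.find_min' hex ⟨hk.le, fun h => lt_irrefl _ h.1⟩
    generalize Nat.find hex = e at hspec hmin hle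
    have hke : k < e := by
      refine lt_of_le_of_ne hspec.1 ?_
      rintro rfl
      exact hspec.2 ⟨hk, List.prefix_rfl⟩
    refine ⟨e, hke, hle, fun j hkj hje => ?_, fun j hj hp => ?_⟩
    · by_contra hp
      exact hmin j hje ⟨hkj, fun h => hp h.2⟩
    · constructor
      · by_contra hkj
        have h1 : u j < u k := hu_mono j k (not_le.1 hkj) hk
        exact lt_asymm h1 (lt_of_prefix_of_ne hp h1.ne')
      · by_contra hej
        rcases Nat.lt_or_eq_of_le (not_lt.1 hej) with h' | rfl
        · exact hspec.2 ⟨h'.trans hj,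
            prefix_of_lt_of_lt (hu_mono k e hke (h'.trans hj)) (hu_mono e j h' hj) hp⟩
        · exact hspec.2 ⟨hj, hp⟩
  have hparent : ∀ j, k < j → j < e →
      u j ≠ [] ∧ ∃ i, k ≤ i ∧ i < j ∧ u i = (u j).dropLast := by
    intro j hkj hje
    have hjN : j < N := by omega
    have hkltj : u k < u j := hu_mono k j hkj hjN
    have hne : u j ≠ [] := by
      intro h
      rw [h] at hkltj
      simp at hkltj
    have hp := prefix_dropLast (hin j hkj.le hje) hkltj.ne
    obtain ⟨i, hiN, hi⟩ := hu_surj _ (T.dropLast_mem (hu_mem j hjN) hne)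
    refine ⟨hne, i, (hout i hiN (hi ▸ hp)).1, hlt i j hiN hjN ?_, hi⟩
    rw [hi]
    exact dropLast_lt hne
  have hinjk : ∀ m ≤ N, Set.InjOn u (Set.Ico (k + 1) m) := fun m hm =>
    hinj.mono fun i hi => Set.mem_Iio.2 (lt_of_lt_of_le hi.2 hm)
  have hWe : W e = W k - 1 := by
    have hset : T.childrenOf ((Finset.Ico k e).image u) = (Finset.Ico (k + 1) e).image u := by
      ext v
      simp only [PlaneTree.mem_childrenOf, Finset.mem_image, Finset.mem_Ico]
      constructor
      · rintro ⟨hv, hne, i, ⟨hki, hie⟩, hi⟩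
        obtain ⟨j, hjN, rfl⟩ := hu_surj v hv
        have hp : u k <+: u j := (hi ▸ hin i hki hie).trans (List.dropLast_prefix _)
        have hij : i < j := hlt i j (by omega) hjN (hi ▸ dropLast_lt hne)
        exact ⟨j, ⟨by omega, (hout j hjN hp).2⟩, rfl⟩
      · rintro ⟨j, ⟨hkj, hje⟩, rfl⟩
        obtain ⟨hne, i, hki, hij, hi⟩ := hparent j hkj hje
        exact ⟨hu_mem j (by omega), hne, i, ⟨hki, by omega⟩, hi⟩
    rw [T.walk_eq_card_childrenOf hinj hWrec hke.le heN, hset, Finset.card_image_of_injOn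
      (by simpa using hinjk e heN), Nat.card_Ico]
    omega
  have hWm : ∀ m, k < m → m < e → W k ≤ W m := by
    intro m hkm hme
    have hsub : (Finset.Ico (k + 1) (m + 1)).image u ⊆
        T.childrenOf ((Finset.Ico k m).image u) := by
      intro v hv
      simp only [PlaneTree.mem_childrenOf, Finset.mem_image, Finset.mem_Ico] at hv ⊢
      obtain ⟨j, ⟨hkj, hjm⟩, rfl⟩ := hv
      obtain ⟨hne, i, hki, hij, hi⟩ := hparent j hkj (by omega)
      exact ⟨hu_mem j (by omega), hne, i, ⟨hki, by omega⟩, hi⟩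
    have hcard := Finset.card_le_card hsub
    rw [Finset.card_image_of_injOn (by simpa using hinjk (m + 1) (by omega)),
      Nat.card_Ico] at hcard
    rw [T.walk_eq_card_childrenOf hinj hWrec hkm.le (by omega)]
    omega
  have hne : {m | k < m ∧ W m = W k - 1}.Nonempty := ⟨e, hke, hWe⟩
  have hTe : Tk = e := by
    rw [hTk]
    refine le_antisymm (Nat.sInf_le ⟨hke, hWe⟩) ?_
    obtain ⟨h1, h2⟩ := Nat.sInf_mem hne
    by_contra hlt'
    have := hWm _ h1 (not_le.1 hlt')
    omega
  subst hTe
  refine ⟨hne, heN, ?_, ?_⟩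
  · ext v
    constructor
    · rintro ⟨j, ⟨hkj, hje⟩, rfl⟩
      exact ⟨hu_mem j (by omega), hin j hkj hje⟩
    · rintro ⟨hv, hp⟩
      obtain ⟨j, hjN, rfl⟩ := hu_surj v hv
      exact ⟨j, hout j hjN hp, rfl⟩
  · have hset : {v | v ∈ T.verts ∧ u k <+: v ∧ v ≠ u k} = u '' Set.Ico (k + 1) Tk := by
      ext v
      constructor
      · rintro ⟨hv, hp, hvk⟩
        obtain ⟨j, hjN, rfl⟩ := hu_surj v hv
        obtain ⟨hkj, hje⟩ := hout j hjN hp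
        have hjk : j ≠ k := fun h => hvk (h ▸ rfl)
        exact ⟨j, ⟨by omega, hje⟩, rfl⟩
      · rintro ⟨j, ⟨hkj, hje⟩, rfl⟩
        have hkltj : u k < u j := hu_mono k j hkj (by omega)
        exact ⟨hu_mem j (by omega), hin j (by omega) hje, hkltj.ne'⟩
    rw [hset, (hinjk Tk heN).ncard_image, ← Finset.coe_Ico, Set.ncard_coe_finset, Nat.card_Ico]
end

section
/- Let τ be a plane tree with N = ζ(τ) vertices, let u^↑(0), …, u^↑(N−1) be its vertices in lexicographical order and u^↓(0), …, u^↓(N−1) its vertices in reverse-lexicographical order, with associated paths W^↑ and W^↓. Then for every k ∈ {0, …, N−1}, the k-th vertex in lexicographical order coincides with the k̃-th vertex in reverse-lexicographical order, where k̃ = N − 1 − k + |u^↑(k)| − D(k) and D(k) is the number of strict descendants of u^↑(k); consequently W^↓(k̃+1) − W^↓(k̃) = W^↑(k+1) − W^↑(k). -/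
/-!
The index of a vertex in an increasing enumeration is the number of vertices preceding it
(`card_filter_enum`), so both `k` and `k̃` count vertices below `u = u^↑(k)`. A vertex `v`
precedes `u` in both orders if it is a strict ancestor of `u`, in neither order if `v = u` or `v`
is a strict descendant of `u`, and in exactly one of the two orders otherwise; this is the
identity `lex_add_rlex`. Summing it over the tree, in which `u` has exactly `|u|` strict
ancestors (`card_ancestors`), gives `k + k̃ + D + 1 = N + |u|`. The increments of the two paths
then agree because both equal `c(u) - 1`.
-/

open scoped Classical

/-- The index of a term in a strictly increasing enumeration of a finite set is the number of
elements preceding that term. -/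
theorem card_filter_enum {α : Type*} (r : α → α → Prop)
    (irr : ∀ a, ¬ r a a) (asym : ∀ a b, r a b → ¬ r b a)
    (s : Finset α) (N : ℕ) (u : ℕ → α) (hmem : ∀ n < N, u n ∈ s)
    (hsurj : ∀ v ∈ s, ∃ n < N, u n = v)
    (hmono : ∀ i j : ℕ, i < j → j < N → r (u i) (u j)) (k : ℕ) (hk : k < N) :
    (s.filter fun v => r v (u k)).card = k := by
  have h : (s.filter fun v => r v (u k)) = (Finset.range k).image u := by
    ext v
    simp only [Finset.mem_filter, Finset.mem_image, Finset.mem_range]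
    constructor
    · rintro ⟨hv, hr⟩
      obtain ⟨n, hn, rfl⟩ := hsurj v hv
      refine ⟨n, ?_, rfl⟩
      rcases lt_trichotomy n k with h | h | h
      · exact h
      · subst h; exact absurd hr (irr _)
      · exact absurd hr (asym _ _ (hmono k n h hn))
    · rintro ⟨n, hn, rfl⟩
      exact ⟨hmem n (hn.trans hk), hmono n k hn hk⟩
  rw [h, Finset.card_image_of_injOn, Finset.card_range]
  intro i hi j hj hij
  simp only [Finset.coe_range, Set.mem_Iio] at hi hj
  rcases lt_trichotomy i j with h | h | h
  · exact absurd (hij ▸ hmono i j h (hj.trans hk)) (irr _)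
  · exact h
  · exact absurd (hij ▸ hmono j i h (hi.trans hk)) (irr _)

theorem PlaneTree.mem_of_prefix (T : PlaneTree) (v w : List ℕ) (h : v ++ w ∈ T.verts) :
    v ∈ T.verts := by
  induction w using List.reverseRecOn with
  | nil => simpa using h
  | append_singleton w a ih =>
    exact ih (T.parent_mem _ a (by simpa using h))

theorem PlaneTree.card_ancestors (T : PlaneTree) (u : List ℕ) (hu : u ∈ T.verts) :
    (T.verts.filter fun v => v <+: u ∧ v ≠ u).card = u.length := by
  have h : (T.verts.filter fun v => v <+: u ∧ v ≠ u)
      = (Finset.range u.length).image fun i => u.take i := by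
    ext v
    simp only [Finset.mem_filter, Finset.mem_image, Finset.mem_range]
    constructor
    · rintro ⟨-, hp, hne⟩
      refine ⟨v.length, ?_, (List.prefix_iff_eq_take.1 hp).symm⟩
      exact lt_of_le_of_ne hp.length_le fun h => hne (hp.eq_of_length h)
    · rintro ⟨i, hi, rfl⟩
      refine ⟨T.mem_of_prefix _ (u.drop i) (by simpa using hu), List.take_prefix _ _, ?_⟩
      intro h
      have := congrArg List.length h
      simp only [List.length_take] at this
      omega
  rw [h, Finset.card_image_of_injOn, Finset.card_range]
  intro i hi j hj hij
  simp only [Finset.coe_range, Set.mem_Iio] at hi hj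
  have := congrArg List.length hij
  simp only [List.length_take] at this
  omega

theorem lex_cons_cons {α : Type*} (r : α → α → Prop) (a b : α) (v u : List α) :
    List.Lex r (a :: v) (b :: u) ↔ r a b ∨ a = b ∧ List.Lex r v u := by
  constructor
  · intro h
    cases h with
    | rel h => exact Or.inl h
    | cons h => exact Or.inr ⟨rfl, h⟩
  · rintro (h | ⟨rfl, h⟩)
    · exact List.Lex.rel h
    · exact List.Lex.cons h

/-- The number of the two orders in which `v` precedes `u` is `2`, `0` or `1` according to whether
`v` is a strict ancestor of `u`, is `u` or a strict descendant of `u`, or is neither. -/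
theorem lex_add_rlex (v u : List ℕ) :
    (if lexLt v u then 1 else 0) + (if rlexLt v u then 1 else 0)
      + (if u <+: v ∧ v ≠ u then 1 else 0) + (if v = u then 1 else 0)
      = 1 + (if v <+: u ∧ v ≠ u then 1 else 0) := by
  unfold lexLt rlexLt
  induction v generalizing u with
  | nil => cases u <;> simp
  | cons a v ih =>
    cases u with
    | nil => simp
    | cons b u =>
      rcases lt_trichotomy a b with h | h | h
      · simp only [lex_cons_cons]
        simp [h, h.ne, h.ne', not_lt.2 h.le]
      · subst h
        simp only [lex_cons_cons]
        simpa using ih u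
      · simp only [lex_cons_cons]
        simp [h, h.ne, h.ne', not_lt.2 h.le]

theorem lexLt_asymm (a b : List ℕ) (h : lexLt a b) : ¬ lexLt b a := by
  unfold lexLt at *
  exact asymm h

theorem rlexLt_asymm (a b : List ℕ) (h : rlexLt a b) : ¬ rlexLt b a := by
  unfold rlexLt at *
  exact asymm h

/-- The `k`-th vertex in lexicographical order coincides with the `k̃`-th vertex
in reverse-lexicographical order, where `k̃ = N − 1 − k + |u^↑(k)| − D(k)` and
`D(k)` is the number of strict descendants of `u^↑(k)`; consequently
`ΔW^↓(k̃+1) = ΔW^↑(k+1)`. -/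
theorem lex_index_to_revlex_index
    (T : PlaneTree) (N : ℕ) (hN : N = T.verts.card)
    (uU : ℕ → List ℕ)
    (huU_mem : ∀ n < N, uU n ∈ T.verts)
    (huU_surj : ∀ v ∈ T.verts, ∃ n < N, uU n = v)
    (huU_mono : ∀ i j : ℕ, i < j → j < N → lexLt (uU i) (uU j))
    (uD : ℕ → List ℕ)
    (huD_mem : ∀ n < N, uD n ∈ T.verts)
    (huD_surj : ∀ v ∈ T.verts, ∃ n < N, uD n = v)
    (huD_mono : ∀ i j : ℕ, i < j → j < N → rlexLt (uD i) (uD j))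
    (WU WD : ℕ → ℤ)
    (hWU0 : WU 0 = 0)
    (hWUrec : ∀ n < N, WU (n + 1) = WU n + T.numChildren (uU n) - 1)
    (hWD0 : WD 0 = 0)
    (hWDrec : ∀ n < N, WD (n + 1) = WD n + T.numChildren (uD n) - 1)
    (k : ℕ) (hk : k < N)
    (D : ℕ) (hD : D = Set.ncard {v | v ∈ T.verts ∧ uU k <+: v ∧ v ≠ uU k})
    (kt : ℕ) (hkt : kt = N - 1 - k + (uU k).length - D) :
    kt < N ∧ uD kt = uU k ∧
    WD (kt + 1) - WD kt = WU (k + 1) - WU k := by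
  obtain ⟨m, hm, hmk⟩ := huD_surj _ (huU_mem k hk)
  have hU := card_filter_enum lexLt (fun a h => lexLt_asymm a a h h) lexLt_asymm
    T.verts N uU huU_mem huU_surj huU_mono k hk
  have hR := card_filter_enum rlexLt (fun a h => rlexLt_asymm a a h h) rlexLt_asymm
    T.verts N uD huD_mem huD_surj huD_mono m hm
  rw [hmk] at hR
  have hA := T.card_ancestors _ (huU_mem k hk)
  have hD' : D = (T.verts.filter fun v => uU k <+: v ∧ v ≠ uU k).card := by
    rw [hD, ← Set.ncard_coe_finset]
    congr 1
    ext v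
    simp
  have hS := Finset.sum_congr (rfl : T.verts = T.verts)
    fun v _ => lex_add_rlex v (uU k)
  have hE : (∑ v ∈ T.verts, if v = uU k then 1 else 0) = 1 := by
    simp [huU_mem k hk]
  simp only [Finset.sum_add_distrib] at hS
  rw [hE] at hS
  simp only [← Finset.card_filter, Finset.sum_const, smul_eq_mul, mul_one] at hS
  rw [hU, hR, hA, ← hD', ← hN] at hS
  obtain rfl : kt = m := by omega
  refine ⟨hm, hmk, ?_⟩
  rw [hWDrec kt hm, hWUrec k hk, hmk]
  ring
end

section
/- Let (X, d_X) and (Y, d_Y) be nonempty metric spaces and let ℛ ⊆ X × Y be a nonempty correspondence whose distortion dis(ℛ) := sup{ |d_X(x, x′) − d_Y(y, y′)| : (x, y), (x′, y′) ∈ ℛ } is finite. Define r_E on the disjoint union E = X ⊔ Y by: r_E(x, x′) = d_X(x, x′) for x, x′ ∈ X; r_E(y, y′) = d_Y(y, y′) for y, y′ ∈ Y; and r_E(x, y) = r_E(y, x) = inf{ d_X(x, x′) + d_Y(y′, y) + ½·dis(ℛ) : (x′, y′) ∈ ℛ } for x ∈ X, y ∈ Y. Then r_E is a pseudometric on E extending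 d_X and d_Y (and it is a metric if dis(ℛ) > 0), and r_E(x, y) = ½·dis(ℛ) for every (x, y) ∈ ℛ. -/
/-!
Write `D` for the distortion. The cross distance from `x` to `y` is the infimum, over pairs
`(a, b) ∈ R`, of the lengths `d(x, a) + D / 2 + d(b, y)`, so it is used only through two facts:
it is at most each such length (`glueDist_inl_inr_le`), and it is at least any common lower bound
of them (`le_glueDist_inl_inr`).

A triangle inequality with one crossing on each side follows from the triangle inequality in `X`
or `Y` applied to each length. One with two crossings, say `x → y → x'` through `(a, b)` and
`(a', b')`, follows from `d(a, a') ≤ d(b, b') + D`, the definition of distortion: the two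
summands `D / 2` pay exactly for the exchange of `d(a, a')` for `d(b, b')`. For `(x, y) ∈ R` the
pair itself gives a length `D / 2`, which is also a lower bound for all lengths; the same bound
shows that cross distances are positive when `D > 0`.
-/

/-- The distortion `dis(ℛ)` of a correspondence `ℛ ⊆ X × Y` between two metric
spaces: `sup{ |d_X(x,x′) − d_Y(y,y′)| : (x,y), (x′,y′) ∈ ℛ }`. -/
noncomputable def corrDistortion {X Y : Type*} [MetricSpace X] [MetricSpace Y]
    (R : Set (X × Y)) : ℝ :=
  sSup ((fun q : (X × Y) × (X × Y) => |dist q.1.1 q.2.1 - dist q.1.2 q.2.2|) '' R ×ˢ R)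

/-- The function `r_E` on the disjoint union `E = X ⊔ Y`: it restricts to `d_X`
on `X`, to `d_Y` on `Y`, and
`r_E(x,y) = inf{ d_X(x,x′) + d_Y(y′,y) + ½·dis(ℛ) : (x′,y′) ∈ ℛ }` across. -/
noncomputable def glueDist {X Y : Type*} [MetricSpace X] [MetricSpace Y]
    (R : Set (X × Y)) : (X ⊕ Y) → (X ⊕ Y) → ℝ
  | .inl x, .inl x' => dist x x'
  | .inr y, .inr y' => dist y y'
  | .inl x, .inr y =>
      sInf ((fun p : X × Y => dist x p.1 + dist p.2 y + corrDistortion R / 2) '' R)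
  | .inr y, .inl x =>
      sInf ((fun p : X × Y => dist x p.1 + dist p.2 y + corrDistortion R / 2) '' R)

section Glue

variable {X Y : Type*} [MetricSpace X] [MetricSpace Y] {R : Set (X × Y)}

lemma abs_dist_sub_dist_le_corrDistortion
    (hdis : BddAbove
      ((fun q : (X × Y) × (X × Y) => |dist q.1.1 q.2.1 - dist q.1.2 q.2.2|) '' R ×ˢ R))
    {p q : X × Y} (hp : p ∈ R) (hq : q ∈ R) :
    |dist p.1 q.1 - dist p.2 q.2| ≤ corrDistortion R :=
  le_csSup hdis ⟨(p, q), ⟨hp, hq⟩, rfl⟩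

/-- No boundedness hypothesis is needed: the supremum of an unbounded set of reals is `0`. -/
lemma corrDistortion_nonneg : 0 ≤ corrDistortion R := by
  apply Real.sSup_nonneg
  rintro _ ⟨q, -, rfl⟩
  exact abs_nonneg _

lemma glueDist_inl_inr_le {p : X × Y} (hp : p ∈ R) (x : X) (y : Y) :
    glueDist R (.inl x) (.inr y) ≤ dist x p.1 + dist p.2 y + corrDistortion R / 2 := by
  refine csInf_le ⟨0, ?_⟩ ⟨p, hp, rfl⟩
  rintro _ ⟨q, -, rfl⟩
  have := corrDistortion_nonneg (R := R)
  positivity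

lemma le_glueDist_inl_inr (hR : R.Nonempty) {x : X} {y : Y} {c : ℝ}
    (h : ∀ p ∈ R, c ≤ dist x p.1 + dist p.2 y + corrDistortion R / 2) :
    c ≤ glueDist R (.inl x) (.inr y) := by
  refine le_csInf (hR.image _) ?_
  rintro _ ⟨p, hp, rfl⟩
  exact h p hp

lemma glueDist_comm (e e' : X ⊕ Y) : glueDist R e e' = glueDist R e' e := by
  rcases e with x | y <;> rcases e' with x' | y'
  · exact dist_comm x x'
  · rfl
  · rfl
  · exact dist_comm y y'

lemma half_corrDistortion_le_glueDist (hR : R.Nonempty) (x : X) (y : Y) :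
    corrDistortion R / 2 ≤ glueDist R (.inl x) (.inr y) :=
  le_glueDist_inl_inr hR fun p _ => by
    linarith [dist_nonneg (x := x) (y := p.1), dist_nonneg (x := p.2) (y := y)]

lemma glueDist_triangle_inl_inl_inr (hR : R.Nonempty) (x x' : X) (y : Y) :
    glueDist R (.inl x) (.inr y) ≤ dist x x' + glueDist R (.inl x') (.inr y) := by
  rw [← sub_le_iff_le_add']
  refine le_glueDist_inl_inr hR fun p hp => ?_
  linarith [glueDist_inl_inr_le hp x y, dist_triangle x x' p.1]

lemma glueDist_triangle_inl_inr_inr (hR : R.Nonempty) (x : X) (y y' : Y) :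
    glueDist R (.inl x) (.inr y') ≤ glueDist R (.inl x) (.inr y) + dist y y' := by
  rw [← sub_le_iff_le_add]
  refine le_glueDist_inl_inr hR fun p hp => ?_
  linarith [glueDist_inl_inr_le hp x y', dist_triangle p.2 y y']

/-- A lower bound for the sum of two cross distances may be checked on pairs of lengths. -/
lemma le_glueDist_add_glueDist (hR : R.Nonempty) {x x' : X} {y y' : Y} {c : ℝ}
    (h : ∀ p ∈ R, ∀ q ∈ R, c ≤ (dist x p.1 + dist p.2 y + corrDistortion R / 2) +
      (dist x' q.1 + dist q.2 y' + corrDistortion R / 2)) :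
    c ≤ glueDist R (.inl x) (.inr y) + glueDist R (.inl x') (.inr y') := by
  rw [← sub_le_iff_le_add]
  refine le_glueDist_inl_inr hR fun p hp => ?_
  rw [sub_le_comm]
  refine le_glueDist_inl_inr hR fun q hq => ?_
  linarith [h p hp q hq]

lemma dist_le_glueDist_inl_inr_inl (hR : R.Nonempty)
    (hdis : BddAbove
      ((fun q : (X × Y) × (X × Y) => |dist q.1.1 q.2.1 - dist q.1.2 q.2.2|) '' R ×ˢ R))
    (x x' : X) (y : Y) :
    dist x x' ≤ glueDist R (.inl x) (.inr y) + glueDist R (.inl x') (.inr y) := by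
  refine le_glueDist_add_glueDist hR fun p hp q hq => ?_
  have h := (abs_le.mp (abs_dist_sub_dist_le_corrDistortion hdis hp hq)).2
  linarith [dist_triangle4 x p.1 q.1 x', dist_comm q.1 x', dist_triangle_right p.2 q.2 y]

lemma dist_le_glueDist_inr_inl_inr (hR : R.Nonempty)
    (hdis : BddAbove
      ((fun q : (X × Y) × (X × Y) => |dist q.1.1 q.2.1 - dist q.1.2 q.2.2|) '' R ×ˢ R))
    (x : X) (y y' : Y) :
    dist y y' ≤ glueDist R (.inl x) (.inr y) + glueDist R (.inl x) (.inr y') := by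
  refine le_glueDist_add_glueDist hR fun p hp q hq => ?_
  have h := (abs_le.mp (abs_dist_sub_dist_le_corrDistortion hdis hp hq)).1
  linarith [dist_triangle4 y p.2 q.2 y', dist_comm y p.2, dist_triangle_left p.1 q.1 x]

lemma glueDist_triangle (hR : R.Nonempty)
    (hdis : BddAbove
      ((fun q : (X × Y) × (X × Y) => |dist q.1.1 q.2.1 - dist q.1.2 q.2.2|) '' R ×ˢ R))
    (e₁ e₂ e₃ : X ⊕ Y) : glueDist R e₁ e₃ ≤ glueDist R e₁ e₂ + glueDist R e₂ e₃ := by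
  rcases e₁ with x₁ | y₁ <;> rcases e₂ with x₂ | y₂ <;> rcases e₃ with x₃ | y₃
  · exact dist_triangle x₁ x₂ x₃
  · exact glueDist_triangle_inl_inl_inr hR x₁ x₂ y₃
  · exact dist_le_glueDist_inl_inr_inl hR hdis x₁ x₃ y₂
  · exact glueDist_triangle_inl_inr_inr hR x₁ y₂ y₃
  · have h := glueDist_triangle_inl_inl_inr hR x₃ x₂ y₁
    rw [dist_comm, add_comm] at h
    exact h
  · exact dist_le_glueDist_inr_inl_inr hR hdis x₂ y₁ y₃
  · have h := glueDist_triangle_inl_inr_inr hR x₃ y₂ y₁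
    rw [dist_comm, add_comm] at h
    exact h
  · exact dist_triangle y₁ y₂ y₃

end Glue

/-- Let `(X, d_X)`, `(Y, d_Y)` be nonempty metric spaces and `ℛ ⊆ X × Y` a
nonempty correspondence of finite distortion. Then `r_E` is a pseudometric on
`E = X ⊔ Y` extending `d_X` and `d_Y`, it is a metric if `dis(ℛ) > 0`, and
`r_E(x,y) = ½·dis(ℛ)` for every `(x,y) ∈ ℛ`. -/
theorem glueDist_pseudometric_and_value_on_corr
    {X Y : Type*} [MetricSpace X] [MetricSpace Y] [Nonempty X] [Nonempty Y]
    (R : Set (X × Y)) (hR : R.Nonempty)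
    (hdis : BddAbove
      ((fun q : (X × Y) × (X × Y) => |dist q.1.1 q.2.1 - dist q.1.2 q.2.2|) '' R ×ˢ R)) :
    (∀ e e' : X ⊕ Y, 0 ≤ glueDist R e e') ∧
    (∀ e : X ⊕ Y, glueDist R e e = 0) ∧
    (∀ e e' : X ⊕ Y, glueDist R e e' = glueDist R e' e) ∧
    (∀ e₁ e₂ e₃ : X ⊕ Y, glueDist R e₁ e₃ ≤ glueDist R e₁ e₂ + glueDist R e₂ e₃) ∧
    (∀ x x' : X, glueDist R (.inl x) (.inl x') = dist x x') ∧
    (∀ y y' : Y, glueDist R (.inr y) (.inr y') = dist y y') ∧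
    (0 < corrDistortion R →
      ∀ e e' : X ⊕ Y, glueDist R e e' = 0 → e = e') ∧
    (∀ p ∈ R, glueDist R (.inl p.1) (.inr p.2) = corrDistortion R / 2) := by
  have hD := corrDistortion_nonneg (R := R)
  refine ⟨?_, ?_, glueDist_comm, glueDist_triangle hR hdis, fun _ _ => rfl, fun _ _ => rfl,
    ?_, ?_⟩
  · rintro (x | y) (x' | y')
    · exact dist_nonneg
    · linarith [half_corrDistortion_le_glueDist hR x y']
    · rw [glueDist_comm]
      linarith [half_corrDistortion_le_glueDist hR x' y]
    · exact dist_nonneg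
  · rintro (x | y)
    · exact dist_self x
    · exact dist_self y
  · rintro hpos (x | y) (x' | y') h
    · exact congrArg Sum.inl (dist_eq_zero.mp h)
    · linarith [half_corrDistortion_le_glueDist hR x y']
    · rw [glueDist_comm] at h
      linarith [half_corrDistortion_le_glueDist hR x' y]
    · exact congrArg Sum.inr (dist_eq_zero.mp h)
  · intro p hp
    refine le_antisymm ?_ (half_corrDistortion_le_glueDist hR p.1 p.2)
    simpa using glueDist_inl_inr_le hp p.1 p.2
end
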